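/- Let η_0, …, η_5 be vectors in a complex vector space with Hermitian form h, satisfying h(η_i, η_i) = −1 for all i, h(η_i, η_j) = (1 − λ̄)^{-1} whenever i < j and the pair (i,j) is an edge of the E_6 Dynkin diagram (edges: (1,2),(2,3),(3,4),(4,5),(0,3)), and h(η_i, η_j) = 0 for non-adjacent pairs, where λ = e^{2πi·p/q} is a root of unity with 1/4 ≤ p/q ≤ 2/5. Let M_i(x) = x − (λ−1)h(x,η_i)η_i, B = M_3M_2M_4M_3M_1M_5M_2M_4M_3, M_0' = BM_0B^{-1}, and W = (M_0M_0'M_0)(M_0'M_0M_0')^{-1}. Then the restriction of W to the span of η_0, …, η_5 has infinite order. -/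

import Mathlib

/-!
Let `a = η₀` and `b = B η₀`. Each `M i` preserves `h` (because `h (η i) (η i) = -1` and `|λ| = 1`),
so `M₀'` is the complex reflection in `b`, and `W` is a word in the two reflections
`M₀ : b ↦ b - c a` and `M₀' : a ↦ a - d b`, where `c = (λ - 1) h(b, a)` and `d = -λ c̄`.
Expanding `b` in the roots gives `c = 1 - λ² + λ³`.

On the span of `a` and `b` the element `W` has determinant `1` and trace
`T = 2 + (τ - 1)² (τ - 2 + 2 cos θ)`, where `τ = |c|²` and `λ = e^{iθ}`. With `x = cos θ` one finds
`τ = 5 - 8x - 4x² + 8x³`, hence `τ - 2 + 2x = (1 - 2x)(3 - 4x²)`, which is positive for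
`-√3/2 < x ≤ 0`, a range containing all `x = cos θ` with `θ ∈ [π/2, 4π/5]`. Thus `T > 2`, and
`W² a - T W a + a = 0` produces an eigenvector of `W` with a positive real eigenvalue other than `1`
(`not_fixed_of_hyperbolic`). This relation is used only as an identity between vectors
(`two_reflections`), so no linear independence of the roots is needed.
-/

/-- A power of a linear automorphism acts on an eigenvector by the power of the eigenvalue. -/
lemma pow_apply_eigen {V : Type*} [AddCommGroup V] [Module ℂ V] (W : V ≃ₗ[ℂ] V) (v : V) (m : ℂ)
    (hv : W v = m • v) (n : ℕ) : (W ^ n) v = m ^ n • v := by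
  induction n with
  | zero => simp
  | succ k ih => rw [pow_succ, LinearEquiv.mul_apply, hv, map_smul, ih, smul_smul, pow_succ']

lemma eigen_not_fixed {V : Type*} [AddCommGroup V] [Module ℂ V] (W : V ≃ₗ[ℂ] V) (v : V) (hv0 : v ≠ 0)
    (m : ℝ) (hm0 : 0 ≤ m) (hm1 : m ≠ 1)
    (hv : W v = (m : ℂ) • v) (n : ℕ) (hn : 0 < n) : (W ^ n) v ≠ v := by
  intro hfix
  rw [pow_apply_eigen W v m hv n] at hfix
  have h1 : ((m : ℂ) ^ n - 1) • v = 0 := by rw [sub_smul, hfix, one_smul, sub_self]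
  rcases smul_eq_zero.mp h1 with h2 | h2
  · have h3 : m ^ n = 1 := by
      have : (m : ℂ) ^ n = 1 := sub_eq_zero.mp h2
      exact_mod_cast this
    exact hm1 ((pow_eq_one_iff_of_nonneg hm0 hn.ne').mp h3)
  · exact hv0 h2

/-- A nonzero vector annihilated by `W² - T W + 1` with `T > 2` real has infinite `W`-orbit: with
`m > 1 > m⁻¹` the roots of `X² - T X + 1`, either the vector `a` itself or `W a - m⁻¹ a` is an
eigenvector. -/
lemma not_fixed_of_hyperbolic {V : Type*} [AddCommGroup V] [Module ℂ V] (W : V ≃ₗ[ℂ] V) (a : V)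
    (ha : a ≠ 0) (T : ℝ) (hT : 2 < T) (hrel : W (W a) - (T : ℂ) • W a + a = 0)
    (n : ℕ) (hn : 0 < n) : (W ^ n) a ≠ a := by
  intro hfix
  obtain ⟨m, hm, hmT⟩ : ∃ m : ℝ, 1 < m ∧ m * m - T * m + 1 = 0 := by
    have hs : 0 ≤ T ^ 2 - 4 := by nlinarith
    refine ⟨(T + √(T ^ 2 - 4)) / 2, ?_, ?_⟩
    · have := Real.sqrt_nonneg (T ^ 2 - 4)
      linarith
    · have := Real.sq_sqrt hs
      linear_combination (1 / 4) * this
  have hm0 : m ≠ 0 := by positivity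
  have hsum : T = m + m⁻¹ := by
    field_simp
    linarith
  by_cases hv : W a - ((m⁻¹ : ℝ) : ℂ) • a = 0
  · exact eigen_not_fixed W a ha m⁻¹ (by positivity) (inv_lt_one_of_one_lt₀ hm).ne
      (sub_eq_zero.mp hv) n hn hfix
  · refine eigen_not_fixed W _ hv m (by positivity) hm.ne' ?_ n hn ?_
    · have hc : (m : ℂ) * ((m⁻¹ : ℝ) : ℂ) = 1 := by
        rw [← Complex.ofReal_mul, mul_inv_cancel₀ hm0, Complex.ofReal_one]
      rw [hsum] at hrel
      push_cast at hrel hc ⊢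
      rw [map_sub, map_smul, ← sub_eq_zero, ← hrel, smul_sub, smul_smul, hc]
      module
    · have hcomm : (W ^ n) (W a) = W a := by
        rw [← LinearEquiv.mul_apply, ← pow_succ, pow_succ', LinearEquiv.mul_apply, hfix]
      rw [map_sub, map_smul, hcomm, hfix]

/-- The Cayley–Hamilton relation at `a` for `(RSR)(SRS)⁻¹`, where `R` and `S` act on `a`, `b` like
complex reflections with multiplier `l`. The vectors `w₀`, `w₁` in the proof are the columns of the
adjugate of the matrix of `SRS`, whose determinant is `l³`. -/
lemma two_reflections {V : Type*} [AddCommGroup V] [Module ℂ V] (R S W : V ≃ₗ[ℂ] V) (a b : V)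
    (l c d T : ℂ) (hl : l ≠ 0)
    (hRa : R a = l • a) (hRb : R b = b - c • a) (hSb : S b = l • b) (hSa : S a = a - d • b)
    (hW : W = (R * S * R) * (S * R * S)⁻¹)
    (hT : l ^ 3 * T = l ^ 2 * (l + c * d) ^ 2 - c * d * (2 * l + c * d) ^ 2 - c * d * l ^ 2
      + (l + c * d) ^ 2) :
    W (W a) - T • W a + a = 0 := by
  have hWC : ∀ x, W (S (R (S x))) = R (S (R x)) := by
    intro x
    have : W * (S * R * S) = R * S * R := by rw [hW]; group
    exact DFunLike.congr_fun this x
  have h0 : l ^ 3 • W a =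
      ((l ^ 2 + c * d * l) * (l * (l + c * d)) - c * (2 * l + c * d) * (d * (2 * l + c * d))) • a
      + (-(d * l) * (l * (l + c * d)) + (l + c * d) * (d * (2 * l + c * d))) • b := by
    have key := hWC ((l * (l + c * d)) • a + (d * (2 * l + c * d)) • b)
    have e1 : S (R (S ((l * (l + c * d)) • a + (d * (2 * l + c * d)) • b))) = l ^ 3 • a := by
      simp only [map_add, map_sub, map_smul, hRa, hRb, hSa, hSb]
      module
    rw [e1, map_smul] at key
    rw [key]
    simp only [map_add, map_sub, map_smul, hRa, hRb, hSa, hSb]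
    module
  have h1 : l ^ 3 • W b =
      ((l ^ 2 + c * d * l) * (c * l) - c * (2 * l + c * d) * (l + c * d)) • a
      + (-(d * l) * (c * l) + (l + c * d) * (l + c * d)) • b := by
    have key := hWC ((c * l) • a + (l + c * d) • b)
    have e1 : S (R (S ((c * l) • a + (l + c * d) • b))) = l ^ 3 • b := by
      simp only [map_add, map_sub, map_smul, hRa, hRb, hSa, hSb]
      module
    rw [e1, map_smul] at key
    rw [key]
    simp only [map_add, map_sub, map_smul, hRa, hRb, hSa, hSb]
    module
  have h2 := congrArg (fun v => l ^ 3 • W v) h0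
  simp only [map_add, map_smul, smul_add] at h2
  rw [smul_comm (l ^ 3) _ (W a), smul_comm (l ^ 3) _ (W b), h0, h1] at h2
  have h3 : (l ^ 3 * l ^ 3) • (W (W a) - T • W a + a) = 0 := by
    have : (l ^ 3 * l ^ 3) • (W (W a) - T • W a + a) =
        l ^ 3 • l ^ 3 • W (W a) - (l ^ 3 * T) • l ^ 3 • W a + (l ^ 3 * l ^ 3) • a := by module
    rw [this, h2, h0, hT]
    module
  exact (smul_eq_zero.mp h3).resolve_left (by positivity)

/-- The bounds on `cos θ` for `θ ∈ [π/2, 4π/5]`; the lower one is `cos (5π/6) = -√3/2`. -/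
lemma cos_bounds (t : ℝ) (h1 : (1 : ℝ) / 4 ≤ t) (h2 : t ≤ 2 / 5) :
    Real.cos (2 * Real.pi * t) ≤ 0 ∧ 4 * Real.cos (2 * Real.pi * t) ^ 2 < 3 := by
  have hpi := Real.pi_pos
  have hle : Real.cos (2 * Real.pi * t) ≤ 0 := by
    rw [← Real.cos_pi_div_two]
    apply Real.cos_le_cos_of_nonneg_of_le_pi <;> nlinarith
  refine ⟨hle, ?_⟩
  have h : Real.cos (Real.pi - Real.pi / 6) < Real.cos (2 * Real.pi * t) := by
    apply Real.cos_lt_cos_of_nonneg_of_le_pi <;> nlinarith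
  rw [Real.cos_pi_sub, Real.cos_pi_div_six] at h
  have h3 : √3 ^ 2 = (3 : ℝ) := Real.sq_sqrt (by norm_num)
  nlinarith


open Complex in
/-- Wajnryb's element W, built from the complex reflections M_i in
an E_6 configuration of roots η_0, …, η_5 with multiplier λ = e^{2πi p/q},
1/4 ≤ p/q ≤ 2/5, acts with infinite order on the span of η_0, …, η_5. -/
theorem stmt19 {V : Type*} [AddCommGroup V] [Module ℂ V]
    (h : V → V → ℂ)
    (hadd₁ : ∀ x y z : V, h (x + y) z = h x z + h y z)
    (hsmul₁ : ∀ (c : ℂ) (x y : V), h (c • x) y = c * h x y)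
    (hherm : ∀ x y : V, h y x = starRingEnd ℂ (h x y))
    (p q : ℕ) (hq : 0 < q)
    (hlow : (1 : ℝ) / 4 ≤ (p : ℝ) / (q : ℝ)) (hhigh : (p : ℝ) / (q : ℝ) ≤ 2 / 5)
    (lam : ℂ) (hlam : lam = Complex.exp (2 * Real.pi * Complex.I * p / q))
    (η : Fin 6 → V)
    (hdiag : ∀ i : Fin 6, h (η i) (η i) = -1)
    -- E6 Dynkin diagram edges among {0,…,5}: (1,2),(2,3),(3,4),(4,5),(0,3)
    (hedge : ∀ i j : Fin 6,
      ((i, j) = (1, 2) ∨ (i, j) = (2, 3) ∨ (i, j) = (3, 4) ∨ (i, j) = (4, 5) ∨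
        (i, j) = (0, 3)) → h (η i) (η j) = (1 - lam⁻¹)⁻¹)
    (hnonedge : ∀ i j : Fin 6, i < j →
      ¬((i, j) = (1, 2) ∨ (i, j) = (2, 3) ∨ (i, j) = (3, 4) ∨ (i, j) = (4, 5) ∨
        (i, j) = (0, 3)) → h (η i) (η j) = 0)
    (M : Fin 6 → V ≃ₗ[ℂ] V)
    (hM : ∀ (i : Fin 6) (x : V), M i x = x - ((lam - 1) * h x (η i)) • η i)
    (B M₀' W : V ≃ₗ[ℂ] V)
    (hB : B = M 3 * M 2 * M 4 * M 3 * M 1 * M 5 * M 2 * M 4 * M 3)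
    (hM₀' : M₀' = B * M 0 * B⁻¹)
    (hW : W = (M 0 * M₀' * M 0) * (M₀' * M 0 * M₀')⁻¹) :
    ¬ ∃ n : ℕ, 0 < n ∧ ∀ x ∈ Submodule.span ℂ (Set.range η), (W ^ n) x = x := by
  rintro ⟨n, hn, hfix⟩
  obtain ⟨x, hx⟩ : ∃ x : ℝ, x = Real.cos (2 * Real.pi * ((p : ℝ) / q)) := ⟨_, rfl⟩
  obtain ⟨hx0, hx3⟩ := cos_bounds _ hlow hhigh
  rw [← hx] at hx0 hx3
  have hlam' : lam = Complex.exp ((2 * Real.pi * ((p : ℝ) / q) : ℝ) * Complex.I) := by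
    rw [hlam]
    congr 1
    push_cast
    ring
  have hnorm : ‖lam‖ = 1 := by rw [hlam', Complex.norm_exp_ofReal_mul_I]
  have hre : lam.re = x := by rw [hlam', Complex.exp_ofReal_mul_I_re, hx]
  have hl0 : lam ≠ 0 := by
    intro h0
    simp [h0] at hnorm
  have hl1 : lam - 1 ≠ 0 := by
    intro h0
    rw [sub_eq_zero.mp h0] at hre
    simp at hre
    linarith
  have hl1' : 1 - lam ≠ 0 := by
    rw [← neg_sub]
    exact neg_ne_zero.mpr hl1
  have hconj : starRingEnd ℂ lam = lam⁻¹ := (Complex.inv_eq_conj hnorm).symm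
  have htr : lam + lam⁻¹ = 2 * (x : ℂ) := by
    rw [← hconj, Complex.add_conj, hre]
    push_cast
    ring
  have hadd₂ : ∀ u v w : V, h u (v + w) = h u v + h u w := by
    intro u v w
    rw [hherm (v + w) u, hadd₁, map_add, ← hherm, ← hherm]
  have hsmul₂ : ∀ (k : ℂ) (u v : V), h u (k • v) = starRingEnd ℂ k * h u v := by
    intro k u v
    rw [hherm (k • v) u, hsmul₁, map_mul, ← hherm]
  have hMh : ∀ i u v, h (M i u) (M i v) = h u v := by
    intro i u v
    have e := hherm v (η i)
    rw [hM, hM, sub_eq_add_neg u, sub_eq_add_neg v, ← neg_smul, ← neg_smul]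
    simp only [hadd₁, hadd₂, hsmul₁, hsmul₂, hdiag, map_neg, map_mul, map_sub, map_one, hconj, e]
    field_simp
    ring
  have hBh : ∀ u v, h (B u) (B v) = h u v := by
    intro u v
    simp only [hB, LinearEquiv.mul_apply, hMh]
  have hM₀'x : ∀ u, M₀' u = u - ((lam - 1) * h u (B (η 0))) • B (η 0) := by
    intro u
    have e : B (B⁻¹ u) = u := B.apply_symm_apply u
    have e2 := hBh (B⁻¹ u) (η 0)
    rw [e] at e2
    rw [hM₀', LinearEquiv.mul_apply, LinearEquiv.mul_apply, hM, map_sub, map_smul, e, ← e2]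
  -- The action of the reflections on the roots, read off from the Dynkin diagram.
  have hself : ∀ i, M i (η i) = lam • η i := by
    intro i
    rw [hM, hdiag]
    module
  have hup : ∀ i j : Fin 6, ((i, j) = (1, 2) ∨ (i, j) = (2, 3) ∨ (i, j) = (3, 4) ∨
      (i, j) = (4, 5) ∨ (i, j) = (0, 3)) → M j (η i) = η i - lam • η j := by
    intro i j hij
    rw [hM, hedge i j hij]
    congr 2
    field_simp
  have hdown : ∀ i j : Fin 6, ((i, j) = (1, 2) ∨ (i, j) = (2, 3) ∨ (i, j) = (3, 4) ∨
      (i, j) = (4, 5) ∨ (i, j) = (0, 3)) → M i (η j) = η j + η i := by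
    intro i j hij
    have e : (lam - 1) * h (η j) (η i) = -1 := by
      rw [hherm (η i) (η j), hedge i j hij, map_inv₀, map_sub, map_one, map_inv₀, hconj, inv_inv]
      field_simp
      ring
    rw [hM, e]
    module
  have hfix₁ : ∀ i j : Fin 6, i < j → ¬((i, j) = (1, 2) ∨ (i, j) = (2, 3) ∨ (i, j) = (3, 4) ∨
      (i, j) = (4, 5) ∨ (i, j) = (0, 3)) → M j (η i) = η i := by
    intro i j hlt hij
    rw [hM, hnonedge i j hlt hij]
    module
  have hfix₂ : ∀ i j : Fin 6, i < j → ¬((i, j) = (1, 2) ∨ (i, j) = (2, 3) ∨ (i, j) = (3, 4) ∨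
      (i, j) = (4, 5) ∨ (i, j) = (0, 3)) → M i (η j) = η j := by
    intro i j hlt hij
    rw [hM, hherm (η i) (η j), hnonedge i j hlt hij, map_zero]
    module
  have m30 := hup 0 3 (by decide)
  have m40 := hfix₁ 0 4 (by decide) (by decide)
  have m43 := hup 3 4 (by decide)
  have m20 := hfix₁ 0 2 (by decide) (by decide)
  have m23 := hdown 2 3 (by decide)
  have m24 := hfix₂ 2 4 (by decide) (by decide)
  have m50 := hfix₁ 0 5 (by decide) (by decide)
  have m52 := hfix₁ 2 5 (by decide) (by decide)
  have m53 := hfix₁ 3 5 (by decide) (by decide)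
  have m54 := hup 4 5 (by decide)
  have m10 := hfix₁ 0 1 (by decide) (by decide)
  have m12 := hdown 1 2 (by decide)
  have m13 := hfix₂ 1 3 (by decide) (by decide)
  have m14 := hfix₂ 1 4 (by decide) (by decide)
  have m15 := hfix₂ 1 5 (by decide) (by decide)
  have m31 := hfix₁ 1 3 (by decide) (by decide)
  have m32 := hup 2 3 (by decide)
  have m34 := hdown 3 4 (by decide)
  have m35 := hfix₂ 3 5 (by decide) (by decide)
  have m41 := hfix₁ 1 4 (by decide) (by decide)
  have m42 := hfix₁ 2 4 (by decide) (by decide)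
  have m45 := hdown 4 5 (by decide)
  have m21 := hup 1 2 (by decide)
  have m25 := hfix₂ 2 5 (by decide) (by decide)
  have m01 := hfix₂ 0 1 (by decide) (by decide)
  have m02 := hfix₂ 0 2 (by decide) (by decide)
  have m03 := hdown 0 3 (by decide)
  have m04 := hfix₂ 0 4 (by decide) (by decide)
  have m05 := hfix₂ 0 5 (by decide) (by decide)
  have hb : B (η 0) = η 0 - lam • η 1 + (lam ^ 2 - lam) • η 2 + (lam ^ 2 - lam - lam ^ 3) • η 3
      + (lam ^ 2 - lam ^ 3) • η 4 - lam ^ 3 • η 5 := by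
    simp only [hB, LinearEquiv.mul_apply, map_add, map_sub, map_smul, hself,
      m30, m40, m43, m20, m23, m24, m50, m52, m53, m54, m10, m12, m13, m14,
      m15, m31, m32, m34, m35, m41, m42, m45, m21, m25]
    module
  have hRb : M 0 (B (η 0)) = B (η 0) - (1 - lam ^ 2 + lam ^ 3) • η 0 := by
    rw [hb]
    simp only [map_add, map_sub, map_smul, hself, m01, m02, m03, m04, m05]
    module
  have ha : η 0 ≠ 0 := by
    intro h0
    have e := hsmul₁ 0 (η 0) (η 0)
    rw [zero_smul, zero_mul, ← h0, hdiag] at e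
    norm_num at e
  have hc : (lam - 1) * h (B (η 0)) (η 0) = 1 - lam ^ 2 + lam ^ 3 := by
    rw [hM] at hRb
    exact smul_left_injective ℂ ha (sub_right_injective hRb)
  have hd : (lam - 1) * h (η 0) (B (η 0)) = -lam * (1 - lam⁻¹ ^ 2 + lam⁻¹ ^ 3) := by
    have e := congrArg (starRingEnd ℂ) hc
    simp only [map_mul, map_sub, map_add, map_pow, map_one, hconj, ← hherm] at e
    rw [← e]
    field_simp
    ring
  have hSa : M₀' (η 0) = η 0 - (-lam * (1 - lam⁻¹ ^ 2 + lam⁻¹ ^ 3)) • B (η 0) := by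
    rw [hM₀'x, hd]
  have hSb : M₀' (B (η 0)) = lam • B (η 0) := by
    rw [hM₀'x, hBh, hdiag]
    module
  -- `τ = |c|²` as a polynomial in `x = cos θ`.
  obtain ⟨τ, hτ⟩ : ∃ τ : ℝ, τ = 5 - 8 * x - 4 * x ^ 2 + 8 * x ^ 3 := ⟨_, rfl⟩
  have hτc : (1 - lam ^ 2 + lam ^ 3) * (1 - lam⁻¹ ^ 2 + lam⁻¹ ^ 3) = (τ : ℂ) := by
    have e : (τ : ℂ) = 5 - 4 * (lam + lam⁻¹) - (lam + lam⁻¹) ^ 2 + (lam + lam⁻¹) ^ 3 := by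
      rw [hτ, htr]
      push_cast
      ring
    rw [e]
    field_simp
    ring
  have hpos : 0 < τ - 2 + 2 * x := by
    have e : τ - 2 + 2 * x = (1 - 2 * x) * (3 - 4 * x ^ 2) := by rw [hτ]; ring
    rw [e]
    exact mul_pos (by linarith) (by linarith)
  have hT : 2 < 2 + (τ - 1) ^ 2 * (τ - 2 + 2 * x) := by
    have : 0 < τ - 1 := by linarith
    have : 0 < (τ - 1) ^ 2 * (τ - 2 + 2 * x) := by positivity
    linarith
  refine not_fixed_of_hyperbolic W (η 0) ha _ hT ?_ n hn
    (hfix _ (Submodule.subset_span ⟨0, rfl⟩))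
  refine two_reflections (M 0) M₀' W (η 0) (B (η 0)) lam _ _ _ hl0 (hself 0) hRb hSb hSa hW ?_
  have hcd : (1 - lam ^ 2 + lam ^ 3) * (-lam * (1 - lam⁻¹ ^ 2 + lam⁻¹ ^ 3)) = -lam * (τ : ℂ) := by
    rw [← hτc]
    ring
  have hx2 : 2 * (x : ℂ) * lam = lam ^ 2 + 1 := by
    rw [← htr]
    field_simp
  rw [hcd]
  push_cast
  linear_combination (lam ^ 2 * ((τ : ℂ) - 1) ^ 2) * hx2
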